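/- There exists n₀ such that for every n ≥ n₀ the following holds: let H be a simple graph on n vertices with no isolated vertices and maximum degree Δ(H) ≤ √n/200, and write δ = δ(H). Then every simple graph F on n vertices with exactly C(n−1,2) + δ − 1 edges that contains no subgraph isomorphic to H contains a complete subgraph (clique) on more than n − 12δ vertices. -/

import Mathlib

/-- `G` contains a copy of `H`, i.e. a subgraph isomorphic to `H`: there is an
injection of the vertices of `H` into the vertices of `G` mapping edges to edges. -/
def ContainsCopy {α β : Type*} (G : SimpleGraph α) (H : SimpleGraph β) : Prop :=
  ∃ f : β → α, Function.Injective f ∧ ∀ u v : β, H.Adj u v → G.Adj (f u) (f v)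

/-!
Let `G` be the complement of `F`; it has at most `n - δ` edges, and `F` contains `H` as soon as
`G` and `H` pack. Let `b` be a vertex of maximum degree in `G`.

If `b` has more than `8δ` vertices outside its neighbourhood, then `G` and `H` pack. Place `b` on a
vertex `x` of minimum degree in `H`, and fill the neighbourhood of `x` with an independent set of
low-degree non-neighbours of `b`, so that `b` is in no conflict. Place the other vertices of degree
above `√n` greedily, without conflicts and spread out so that no vertex of `H` is adjacent to images
of too large total degree. All vertices not yet placed have small degree, and any conflict at
such a vertex `u` is removed by swapping `u` with a suitable `v`: the vertices `v` unsuitable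
because a `G`-neighbour of `v` sits next to the position of `u` are few, by the spreading.

Otherwise at most `7δ` edges of `G` avoid `b`, and deleting `b` and one endpoint of each of them
leaves an independent set of `G`, which is a clique of `F`.
-/

open Finset SimpleGraph

variable {V W : Type*}

/-- `G` and `H` pack: they have edge-disjoint copies on a common vertex set. -/
def Packs (G : SimpleGraph V) (H : SimpleGraph W) : Prop :=
  ∃ σ : V ≃ W, Disjoint G (H.comap σ)

theorem Packs.containsCopy {F : SimpleGraph V} {H : SimpleGraph W} (h : Packs Fᶜ H) :
    ContainsCopy F H := by
  obtain ⟨σ, hσ⟩ := h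
  rw [disjoint_comm, disjoint_compl_right_iff] at hσ
  exact ⟨σ.symm, σ.symm.injective, fun u v huv => hσ (by simpa using huv)⟩

section Degrees

variable [Fintype V] (G : SimpleGraph V) [DecidableRel G.Adj]

theorem exists_mem_forall_not_adj {S L : Finset V} {r : ℕ} (hr : ∀ v ∈ S, G.degree v ≤ r)
    (hcard : #S * (r + 1) < #L) : ∃ x ∈ L, x ∉ S ∧ ∀ v ∈ S, ¬ G.Adj v x := by
  classical
  have hclosed : #(S.biUnion fun v => insert v (G.neighborFinset v)) ≤ #S * (r + 1) :=
    card_biUnion_le_card_mul _ _ _ fun v hv =>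
      (card_insert_le _ _).trans (Nat.add_le_add_right (by simpa using hr v hv) 1)
  obtain ⟨x, hxL, hx⟩ := exists_mem_notMem_of_card_lt_card (hclosed.trans_lt hcard)
  simp only [mem_biUnion, mem_insert, mem_neighborFinset, not_exists, not_and, not_or] at hx
  exact ⟨x, hxL, fun h => (hx x h).1 rfl, fun v hv => (hx v hv).2⟩

theorem exists_isIndepSet_subset {L : Finset V} {r k : ℕ} (hr : ∀ v ∈ L, G.degree v ≤ r)
    (hk : k * (r + 1) ≤ #L) : ∃ I ⊆ L, #I = k ∧ G.IsIndepSet I := by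
  classical
  induction k with
  | zero => exact ⟨∅, by simp⟩
  | succ k ih =>
    obtain ⟨I, hIL, rfl, hI⟩ := ih (le_trans (by gcongr; omega) hk)
    obtain ⟨x, hxL, hxI, hx⟩ := exists_mem_forall_not_adj G (fun v hv => hr v (hIL hv))
      (show #I * (r + 1) < #L by linarith)
    refine ⟨insert x I, insert_subset hxL hIL, card_insert_of_notMem hxI, ?_⟩
    rw [coe_insert]
    exact hI.insert fun v hv _ => ⟨fun h => hx v hv h.symm, hx v hv⟩

theorem sum_degree_le_two_mul_card_edgeFinset (A : Finset V) :
    ∑ a ∈ A, G.degree a ≤ 2 * #G.edgeFinset := by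
  rw [← G.sum_degrees_eq_twice_card_edges]
  exact sum_le_sum_of_subset (subset_univ A)

theorem card_mul_le_of_forall_le_degree {A : Finset V} {s : ℕ} (hA : ∀ a ∈ A, s ≤ G.degree a) :
    #A * s ≤ 2 * #G.edgeFinset := by
  rw [← smul_eq_mul]
  exact (card_nsmul_le_sum _ _ _ hA).trans (sum_degree_le_two_mul_card_edgeFinset G A)

theorem degree_add_degree_le_card_edgeFinset_add_one {a b : V} (hab : a ≠ b) :
    G.degree a + G.degree b ≤ #G.edgeFinset + 1 := by
  classical
  rw [← G.card_incidenceFinset_eq_degree, ← G.card_incidenceFinset_eq_degree,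
    ← card_union_add_card_inter]
  gcongr
  · exact union_subset (G.incidenceFinset_subset a) (G.incidenceFinset_subset b)
  · rw [← card_singleton s(a, b)]
    refine card_le_card fun e he => ?_
    simp only [mem_inter, mem_incidenceFinset] at he
    simpa using G.incidenceSet_inter_incidenceSet_subset hab he

theorem card_filter_compl_neighborFinset_mul_add_le [DecidableEq V] (b : V) (r : ℕ) :
    #{v ∈ Gᶜ.neighborFinset b | r < G.degree v} * (r + 1) + 2 * G.degree b
      ≤ 2 * #G.edgeFinset := by
  set B : Finset V := {v ∈ Gᶜ.neighborFinset b | r < G.degree v}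
  have hB : #B * (r + 1) ≤ ∑ v ∈ B, G.degree v := by
    rw [← smul_eq_mul]
    exact card_nsmul_le_sum _ _ _ fun v hv => (mem_filter.1 hv).2
  have hN : G.degree b ≤ ∑ v ∈ G.neighborFinset b, G.degree v := by
    rw [← G.card_neighborFinset_eq_degree, card_eq_sum_ones]
    refine sum_le_sum fun v hv => ?_
    exact (G.degree_pos_iff_exists_adj v).2 ⟨b, ((G.mem_neighborFinset b v).1 hv).symm⟩
  have hdisj : Disjoint (G.neighborFinset b) B :=
    disjoint_left.2 fun v hv hvB => by simp_all [B]
  have hb : b ∉ G.neighborFinset b ∪ B := by simp [B]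
  have hsum : G.degree b + (∑ v ∈ G.neighborFinset b, G.degree v + ∑ v ∈ B, G.degree v)
      ≤ 2 * #G.edgeFinset := by
    rw [← sum_union hdisj, ← sum_insert (f := fun v => G.degree v) hb]
    exact sum_degree_le_two_mul_card_edgeFinset G _
  omega

theorem exists_isIndepSet_insert (b : V) {k : ℕ} (hG : #G.edgeFinset ≤ Fintype.card V)
    (hk : 8 * k + G.degree b < Fintype.card V) :
    ∃ I : Finset V, #I = k ∧ b ∉ I ∧ (∀ v ∈ I, G.degree v ≤ 3) ∧ G.IsIndepSet (insert b I) := by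
  classical
  set L : Finset V := {v ∈ Gᶜ.neighborFinset b | G.degree v ≤ 3} with hLdef
  have hL : ∀ v ∈ L, (b ≠ v ∧ ¬ G.Adj b v) ∧ G.degree v ≤ 3 := fun v hv => by
    simpa [hLdef] using hv
  have hLcard : k * (3 + 1) ≤ #L := by
    have hhigh := card_filter_compl_neighborFinset_mul_add_le G b 3
    have hsplit : #L + #{v ∈ Gᶜ.neighborFinset b | 3 < G.degree v} = Gᶜ.degree b := by
      simpa only [not_le, card_neighborFinset_eq_degree]
        using card_filter_add_card_filter_not (s := Gᶜ.neighborFinset b) (G.degree · ≤ 3)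
    rw [degree_compl] at hsplit
    omega
  obtain ⟨I, hIL, rfl, hI⟩ := exists_isIndepSet_subset G (fun v hv => (hL v hv).2) hLcard
  refine ⟨I, rfl, fun hb => (hL b (hIL hb)).1.1 rfl, fun v hv => (hL v (hIL hv)).2, ?_⟩
  exact hI.insert fun v hv _ =>
    ⟨(hL v (hIL hv)).1.2, fun h => (hL v (hIL hv)).1.2 h.symm⟩

theorem exists_isVertexCover_card_le :
    ∃ C : Finset V, #C ≤ #G.edgeFinset ∧ G.IsVertexCover C := by
  classical
  refine ⟨G.edgeFinset.image fun e => e.out.1, card_image_le, fun u v huv => ?_⟩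
  have hmem : s(u, v).out.1 ∈ G.edgeFinset.image fun e => e.out.1 :=
    mem_image_of_mem _ (by simpa using huv)
  rcases Sym2.mem_iff.1 (Sym2.out_fst_mem s(u, v)) with h | h
  exacts [.inl (h ▸ hmem), .inr (h ▸ hmem)]

theorem exists_isIndepSet_card_ge (b : V) :
    ∃ K : Finset V, Fintype.card V + G.degree b ≤ #K + 1 + #G.edgeFinset ∧ G.IsIndepSet K := by
  classical
  obtain ⟨C, hCcard, hC⟩ := exists_isVertexCover_card_le (G.deleteIncidenceSet b)
  refine ⟨(insert b C)ᶜ, ?_, ?_⟩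
  · have hdel := G.card_edgeFinset_deleteIncidenceSet b
    have hdeg := G.degree_le_card_edgeFinset b
    have hcompl := card_add_card_compl (insert b C)
    have hinsert := card_insert_le b C
    omega
  · rw [coe_compl, isIndepSet_compl_iff_isVertexCover, coe_insert]
    intro u v huv
    by_cases hub : u = b
    · simp [hub]
    by_cases hvb : v = b
    · simp [hvb]
    · exact (hC (G.deleteIncidenceSet_adj.2 ⟨huv, hub, hvb⟩)).imp (.inr ·) (.inr ·)

end Degrees

theorem card_edgeFinset_compl_add_card_edgeFinset [Fintype V] [DecidableEq V]
    (F : SimpleGraph V) [DecidableRel F.Adj] :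
    #Fᶜ.edgeFinset + #F.edgeFinset = (Fintype.card V).choose 2 := by
  rw [← card_edgeFinset_top_eq_card_choose_two,
    ← card_union_of_disjoint (disjoint_edgeFinset.2 disjoint_compl_left), ← edgeFinset_sup]
  congr!
  exact compl_sup_eq_top

/-- The total weight of those vertices in `A` that `σ` places on neighbours of `y`. With `G.degree`
for weights, it bounds how many vertices of `G` have a neighbour placed next to `y`. -/
def load (H : SimpleGraph W) [DecidableRel H.Adj] (d : V → ℕ) (σ : V → W) (A : Finset V)
    (y : W) : ℕ :=
  ∑ a ∈ A with H.Adj y (σ a), d a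

section Load

variable (H : SimpleGraph W) [DecidableRel H.Adj] {d : V → ℕ} {σ : V → W} {A : Finset V} {y : W}

theorem load_congr {τ : V → W} (h : Set.EqOn σ τ A) : load H d σ A y = load H d τ A y :=
  sum_congr (filter_congr fun a ha => by rw [h ha]) fun _ _ => rfl

theorem load_insert_le [DecidableEq V] {a : V} (ha : a ∉ A) :
    load H d σ (insert a A) y ≤ load H d σ A y + if H.Adj y (σ a) then d a else 0 := by
  unfold load
  rw [filter_insert]
  split_ifs with h
  · rw [sum_insert (by simp [ha]), add_comm]
  · simp

variable [Fintype W]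

theorem sum_load : ∑ y, load H d σ A y = ∑ a ∈ A, d a * H.degree (σ a) := by
  unfold load
  simp_rw [sum_filter]
  rw [sum_comm]
  refine sum_congr rfl fun a _ => ?_
  rw [← sum_filter, sum_const, smul_eq_mul, mul_comm, ← card_neighborFinset_eq_degree]
  congr 2
  ext y
  simp [H.adj_comm]

theorem card_filter_lt_load_le {c k : ℕ} (hd : ∑ a ∈ A, d a ≤ k * (c + 1)) :
    #{y | c < load H d σ A y} ≤ k * H.maxDegree := by
  refine Nat.le_of_mul_le_mul_right ?_ c.succ_pos
  calc #{y | c < load H d σ A y} * (c + 1)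
      ≤ ∑ y with c < load H d σ A y, load H d σ A y := by
        rw [← smul_eq_mul]
        exact card_nsmul_le_sum _ _ _ fun y hy => (mem_filter.1 hy).2
    _ ≤ ∑ y, load H d σ A y := sum_le_sum_of_subset (subset_univ _)
    _ ≤ (∑ a ∈ A, d a) * H.maxDegree := by
        rw [sum_load, sum_mul]
        gcongr
        exact H.degree_le_maxDegree _
    _ ≤ k * H.maxDegree * (c + 1) := by
        rw [mul_right_comm]
        gcongr

theorem load_le_maxDegree_mul {s : ℕ} (hσ : Set.InjOn σ A)
    (hd : ∀ a ∈ A, H.Adj y (σ a) → d a ≤ s) : load H d σ A y ≤ H.maxDegree * s := by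
  have hcard : #{a ∈ A | H.Adj y (σ a)} ≤ H.maxDegree := by
    refine le_trans ?_ (H.degree_le_maxDegree y)
    rw [← card_neighborFinset_eq_degree]
    exact card_le_card_of_injOn σ (fun a ha => by simpa using (mem_filter.1 ha).2)
      (hσ.mono (filter_subset _ _))
  calc load H d σ A y ≤ #{a ∈ A | H.Adj y (σ a)} * s :=
        sum_le_card_nsmul _ _ _ fun a ha => hd a (mem_filter.1 ha).1 (mem_filter.1 ha).2
    _ ≤ H.maxDegree * s := by gcongr

theorem load_univ_le [Fintype V] {s : ℕ} (hσ : Function.Injective σ)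
    (hd : ∀ v ∉ A, H.Adj y (σ v) → d v ≤ s) :
    load H d σ univ y ≤ load H d σ A y + H.maxDegree * s := by
  classical
  have hsplit : load H d σ univ y = load H d σ A y + load H d σ Aᶜ y := by
    simp only [load, sum_filter, sum_add_sum_compl]
  rw [hsplit]
  gcongr
  exact load_le_maxDegree_mul H hσ.injOn fun a ha => hd a (mem_compl.1 ha)

end Load

section Swap

variable [DecidableEq V] {G : SimpleGraph V} {H : SimpleGraph W} {σ : V ≃ W} {u x : V}

theorem swap_trans_apply_of_notMem {S : Finset V} {v : V} (hu : u ∉ S) (hx : x ∉ S) (hv : v ∈ S) :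
    (Equiv.swap u x).trans σ v = σ v := by
  rw [Equiv.trans_apply, Equiv.swap_apply_of_ne_of_ne] <;> rintro rfl <;> contradiction

theorem not_adj_swap_trans (hux : ¬ G.Adj u x) (h : ∀ z, G.Adj u z → ¬ H.Adj (σ x) (σ z))
    {z : V} (huz : G.Adj u z) :
    ¬ H.Adj ((Equiv.swap u x).trans σ u) ((Equiv.swap u x).trans σ z) := by
  have hzx : z ≠ x := by
    rintro rfl
    exact hux huz
  simpa [Equiv.swap_apply_of_ne_of_ne huz.ne' hzx] using h z huz

-- After the swap no conflict involves `u` or `x`, and `σ` has not moved any other vertex.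
theorem inf_comap_swap_trans_lt (hux : ¬ G.Adj u x)
    (hu : ∀ z, G.Adj u z → ¬ H.Adj (σ x) (σ z)) (hx : ∀ z, G.Adj x z → ¬ H.Adj (σ u) (σ z))
    {v : V} (huv : (G ⊓ H.comap σ).Adj u v) :
    G ⊓ H.comap ((Equiv.swap u x).trans σ) < G ⊓ H.comap σ := by
  set τ := (Equiv.swap u x).trans σ with hτ
  have hτu : ∀ z, G.Adj u z → ¬ H.Adj (τ u) (τ z) := fun z => not_adj_swap_trans hux hu
  have hτx : ∀ z, G.Adj x z → ¬ H.Adj (τ x) (τ z) := fun z => by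
    rw [hτ, Equiv.swap_comm]
    exact not_adj_swap_trans (fun h => hux h.symm) hx
  have hfree : ∀ p q, G.Adj p q → H.Adj (τ p) (τ q) → τ p = σ p := fun p q hG hH => by
    have hpu : p ≠ u := by
      rintro rfl
      exact hτu q hG hH
    have hpx : p ≠ x := by
      rintro rfl
      exact hτx q hG hH
    simp [hτ, Equiv.swap_apply_of_ne_of_ne hpu hpx]
  refine lt_of_le_not_ge (fun p q ⟨hG, hH⟩ => ⟨hG, ?_⟩) fun hle => hτu v huv.1 (hle huv).2
  rw [comap_adj, ← hfree p q hG hH, ← hfree q p hG.symm hH.symm]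
  exact hH

end Swap

section Placement

variable [Fintype W] (H : SimpleGraph W) [DecidableRel H.Adj]

theorem exists_light_position {d : V → ℕ} (σ : V ≃ W) (S A : Finset V) {c k : ℕ}
    (hd : ∑ a ∈ A, d a ≤ k * (c + 1))
    (hroom : #S * (H.maxDegree + 1) + k * H.maxDegree * H.maxDegree < Fintype.card W) :
    ∃ x ∉ S, (∀ v ∈ S, ¬ H.Adj (σ x) (σ v)) ∧ ∀ y, H.Adj y (σ x) → load H d σ A y ≤ c := by
  classical
  set N : Finset W := ({y | c < load H d σ A y} : Finset W).biUnion fun y => H.neighborFinset y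
    with hN
  have hNcard : #N ≤ k * H.maxDegree * H.maxDegree :=
    (card_biUnion_le_card_mul _ _ _ fun y _ => by simpa using H.degree_le_maxDegree y).trans
      (Nat.mul_le_mul_right _ (card_filter_lt_load_le H hd))
  have hcard : #(S.map σ.toEmbedding) * (H.maxDegree + 1) < #Nᶜ := by
    have := card_add_card_compl N
    rw [card_map]
    omega
  obtain ⟨y, hyN, hyS, hy⟩ :=
    exists_mem_forall_not_adj H (fun v _ => H.degree_le_maxDegree v) hcard
  refine ⟨σ.symm y, by simpa using hyS, fun v hv h => ?_, fun z hz => ?_⟩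
  · exact hy (σ v) (by simpa using hv) (by simpa using h.symm)
  · by_contra! hlt
    rw [Equiv.apply_symm_apply] at hz
    simp only [hN, mem_compl, mem_biUnion, mem_filter, mem_univ, true_and, mem_neighborFinset,
      not_exists, not_and] at hyN
    exact hyN z hlt hz

theorem exists_balanced_placement [DecidableEq V] {d : V → ℕ} (σ₀ : V ≃ W) {T A : Finset V}
    {c k M : ℕ} (hTA : Disjoint T A) (hM : ∀ a ∈ A, d a ≤ M) (hd : ∑ a ∈ A, d a ≤ k * (c + 1))
    (hroom : (#T + #A) * (H.maxDegree + 1) + k * H.maxDegree * H.maxDegree < Fintype.card W) :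
    ∃ σ : V ≃ W, Set.EqOn σ σ₀ T ∧ (∀ a ∈ A, ∀ v ∈ T ∪ A, ¬ H.Adj (σ a) (σ v)) ∧
      ∀ y, load H d σ A y ≤ c + M := by
  induction A using Finset.induction_on with
  | empty => exact ⟨σ₀, Set.eqOn_refl _ _, by simp, by simp [load]⟩
  | insert a A ha ih =>
    rw [disjoint_insert_right] at hTA
    rw [sum_insert ha] at hd
    rw [card_insert_of_notMem ha] at hroom
    obtain ⟨σ, hσT, hσA, hσload⟩ := ih hTA.2 (fun b hb => hM b (mem_insert_of_mem hb))
      (by omega) (lt_of_le_of_lt (by gcongr; omega) hroom)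
    have hS : #(T ∪ A) * (H.maxDegree + 1) + k * H.maxDegree * H.maxDegree < Fintype.card W := by
      refine lt_of_le_of_lt ?_ hroom
      gcongr
      exact (card_union_le T A).trans (by omega)
    obtain ⟨x, hxS, hx, hxload⟩ :=
      exists_light_position H σ (T ∪ A) A (d := d) (c := c) (k := k) (by omega) hS
    have haS : a ∉ T ∪ A := by simp [hTA.1, ha]
    set τ := (Equiv.swap a x).trans σ with hτ
    have hτa : τ a = σ x := by simp [hτ]
    have hτS : ∀ v ∈ T ∪ A, τ v = σ v := fun v hv => swap_trans_apply_of_notMem haS hxS hv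
    refine ⟨τ, fun v hv => (hτS v (mem_union_left _ hv)).trans (hσT hv), ?_, fun y => ?_⟩
    · intro b hb v hv
      rw [union_insert] at hv
      rcases mem_insert.1 hb with rfl | hbA <;> rcases mem_insert.1 hv with rfl | hvS
      · exact H.loopless.irrefl _
      · rw [hτa, hτS v hvS]
        exact hx v hvS
      · rw [hτa, hτS b (mem_union_right _ hbA)]
        exact fun h => hx b (mem_union_right _ hbA) h.symm
      · rw [hτS b (mem_union_right _ hbA), hτS v hvS]
        exact hσA b hbA v hvS
    · have hsame : load H d τ A y = load H d σ A y :=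
        load_congr H fun b hb => hτS b (mem_union_right _ hb)
      refine (load_insert_le H ha).trans ?_
      rw [hsame, hτa]
      split_ifs with hy
      · exact Nat.add_le_add (hxload y hy) (hM a (mem_insert_self a A))
      · exact hσload y

end Placement

theorem exists_equiv_apply_eq_forall_symm_mem [Fintype V] [Fintype W]
    (hVW : Fintype.card V = Fintype.card W) {b : V} {I : Finset V}
    (hb : b ∉ I) {x : W} {N : Finset W} (hx : x ∉ N) (hIN : #I = #N) :
    ∃ σ : V ≃ W, σ b = x ∧ ∀ w ∈ N, σ.symm w ∈ I := by
  classical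
  let e : I ≃ N := Finset.equivOfCardEq hIN
  let f : V → W := fun v => if h : v ∈ I then e ⟨v, h⟩ else x
  have hfb : f b = x := dif_neg hb
  have hfI : ∀ v (h : v ∈ I), f v = e ⟨v, h⟩ := fun v h => dif_pos h
  have hinj : Set.InjOn f (insert b I : Finset V) := by
    rw [coe_insert, Set.injOn_insert (mod_cast hb)]
    refine ⟨fun u hu v hv huv => ?_, ?_⟩
    · rw [hfI u hu, hfI v hv] at huv
      simpa using e.injective (Subtype.ext huv)
    · rintro ⟨v, hv, hvb⟩
      rw [hfI v hv, hfb] at hvb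
      exact hx (hvb ▸ (e ⟨v, hv⟩).2)
  obtain ⟨g, hg⟩ := Finset.exists_equiv_extend_of_card_eq (t := (univ : Finset W))
    (by rw [hVW, card_univ]) (subset_univ _) hinj
  refine ⟨g.trans (Equiv.subtypeUnivEquiv mem_univ), ?_, fun w hw => ?_⟩
  · exact (hg b (mem_insert_self b I)).trans hfb
  · obtain ⟨⟨v, hv⟩, hvw⟩ := e.surjective ⟨w, hw⟩
    convert! hv
    rw [Equiv.symm_apply_eq]
    refine Eq.symm ((hg v (mem_insert_of_mem hv)).trans ?_)
    rw [hfI v hv, hvw]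

theorem placement_room {n s D i a : ℕ} (hs : 1000 ≤ s) (hsn : s ^ 2 ≤ n) (hD : 200 * D ≤ s)
    (hi : i ≤ D) (ha : a ≤ 2 * s + 1) : (i + 1 + a) * (D + 1) + 8 * D * D < n :=
  calc (i + 1 + a) * (D + 1) + 8 * D * D
      ≤ (D + 1 + (2 * s + 1)) * (D + 1) + 8 * D * D := by gcongr
    _ < s ^ 2 := by nlinarith
    _ ≤ n := hsn

theorem correction_room {n s D m : ℕ} (hs : 1000 ≤ s) (hsn : s ^ 2 ≤ n) (hD : 200 * D ≤ s)
    (hm : m ≤ D + 2 * s + 2) : m + s * (D + 1) + (n / 4 + (n + 1) / 2 + D * s) < n := by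
  have hDs : 200 * (D * s) ≤ s ^ 2 := by nlinarith
  have hss : 1000 * s ≤ s ^ 2 := by nlinarith
  rw [mul_add_one, mul_comm s D]
  omega

section Packing

variable [Fintype V] [Fintype W] (G : SimpleGraph V) (H : SimpleGraph W)
  [DecidableRel G.Adj] [DecidableRel H.Adj]

theorem exists_swap_partner (σ : V ≃ W) (S : Finset V) (u : V)
    (hroom : #S + G.degree u * (H.maxDegree + 1) + load H (G.degree ·) σ univ (σ u)
      < Fintype.card V) :
    ∃ x ∉ S, ¬ G.Adj u x ∧ (∀ z, G.Adj u z → ¬ H.Adj (σ x) (σ z)) ∧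
      ∀ z, G.Adj x z → ¬ H.Adj (σ u) (σ z) := by
  classical
  set X₁ : Finset V := (G.neighborFinset u).biUnion fun z =>
    (H.neighborFinset (σ z)).map σ.symm.toEmbedding with hX₁
  set X₂ : Finset V := ({z | H.Adj (σ u) (σ z)} : Finset V).biUnion fun z => G.neighborFinset z
    with hX₂
  have hX₁card : #X₁ ≤ G.degree u * H.maxDegree := by
    rw [← card_neighborFinset_eq_degree]
    exact card_biUnion_le_card_mul _ _ _ fun z _ => by simpa using H.degree_le_maxDegree (σ z)
  have hX₂card : #X₂ ≤ load H (G.degree ·) σ univ (σ u) := by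
    simpa only [load, card_neighborFinset_eq_degree]
      using card_biUnion_le (s := {z | H.Adj (σ u) (σ z)}) (t := fun z => G.neighborFinset z)
  have hcard : #(S ∪ G.neighborFinset u ∪ X₁ ∪ X₂) < #(univ : Finset V) := by
    calc #(S ∪ G.neighborFinset u ∪ X₁ ∪ X₂)
        ≤ #S + #(G.neighborFinset u) + #X₁ + #X₂ := by
          refine (card_union_le _ _).trans (Nat.add_le_add_right ?_ _)
          exact (card_union_le _ _).trans (Nat.add_le_add_right (card_union_le _ _) _)
      _ < #(univ : Finset V) := by
          rw [card_neighborFinset_eq_degree, card_univ]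
          linarith
  obtain ⟨x, -, hx⟩ := exists_mem_notMem_of_card_lt_card hcard
  simp only [mem_union, not_or, hX₁, hX₂, mem_biUnion, mem_filter, mem_univ, true_and,
    mem_map_equiv, mem_neighborFinset, not_exists, not_and, Equiv.symm_symm] at hx
  obtain ⟨⟨⟨hxS, hux⟩, hx₁⟩, hx₂⟩ := hx
  exact ⟨x, hxS, hux, fun z huz h => hx₁ z huz h.symm, fun z hxz h => hx₂ z h hxz.symm⟩

theorem packs_of_partial (σ₀ : V ≃ W) (S : Finset V)
    (hS : ∀ u ∈ S, ∀ v ∈ S, G.Adj u v → ¬ H.Adj (σ₀ u) (σ₀ v))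
    (hroom : ∀ σ : V ≃ W, Set.EqOn σ σ₀ S → ∀ u ∉ S,
      #S + G.degree u * (H.maxDegree + 1) + load H (G.degree ·) σ univ (σ u) < Fintype.card V) :
    Packs G H := by
  classical
  -- A minimal conflict graph is empty: a conflict at `u ∉ S` could be removed by a swap.
  obtain ⟨σ, hσ, hmin⟩ := exists_minimalFor_of_wellFoundedLT
    (fun σ : V ≃ W => Set.EqOn σ σ₀ S) (fun σ => G ⊓ H.comap σ) ⟨σ₀, Set.eqOn_refl _ _⟩
  have hout : ∀ u ∉ S, ∀ v, ¬ (G ⊓ H.comap σ).Adj u v := by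
    intro u hu v huv
    obtain ⟨x, hx, hux, hxu, hxx⟩ := exists_swap_partner G H σ S u (hroom σ hσ u hu)
    have hlt := inf_comap_swap_trans_lt hux hxu hxx huv
    refine hlt.not_ge (hmin (fun v hv => ?_) hlt.le)
    rw [swap_trans_apply_of_notMem hu hx hv, hσ hv]
  refine ⟨σ, SimpleGraph.disjoint_left.2 fun u v hG hH => ?_⟩
  by_cases hu : u ∈ S
  · by_cases hv : v ∈ S
    · rw [comap_adj, hσ hu, hσ hv] at hH
      exact hS u hu v hv hG hH
    · exact hout v hv u ⟨hG.symm, hH.symm⟩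
  · exact hout u hu v ⟨hG, hH⟩

omit [DecidableRel G.Adj] in
theorem exists_partial_packing [DecidableEq V] (hVW : Fintype.card V = Fintype.card W)
    {b : V} {I A : Finset V} {x : W} (hb : b ∉ I) (hI : #I = H.degree x)
    (hind : G.IsIndepSet (insert b I)) (hA : Disjoint (insert b I) A)
    {d : V → ℕ} {c k M : ℕ} (hM : ∀ a ∈ A, d a ≤ M) (hd : ∑ a ∈ A, d a ≤ k * (c + 1))
    (hroom : (#I + 1 + #A) * (H.maxDegree + 1) + k * H.maxDegree * H.maxDegree < Fintype.card W) :
    ∃ σ : V ≃ W,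
      (∀ u ∈ insert b I ∪ A, ∀ v ∈ insert b I ∪ A, G.Adj u v → ¬ H.Adj (σ u) (σ v)) ∧
      (∀ w, H.Adj (σ b) w → ∃ v ∈ I, σ v = w) ∧ ∀ y, load H d σ A y ≤ c + M := by
  obtain ⟨σ₀, rfl, hσ₀⟩ := exists_equiv_apply_eq_forall_symm_mem hVW hb
    (H.notMem_neighborFinset_self x) (hI.trans (H.card_neighborFinset_eq_degree x).symm)
  obtain ⟨σ, hσT, hσA, hload⟩ := exists_balanced_placement H σ₀ hA hM hd
    (by rwa [card_insert_of_notMem hb])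
  refine ⟨σ, fun u hu v hv huv => ?_, fun w hw => ?_, hload⟩
  · by_cases huA : u ∈ A
    · exact hσA u huA v hv
    by_cases hvA : v ∈ A
    · exact fun h => hσA v hvA u hu h.symm
    · rw [mem_union, or_iff_left huA] at hu
      rw [mem_union, or_iff_left hvA] at hv
      exact absurd huv (hind (mod_cast hu) (mod_cast hv) huv.ne)
  · rw [hσT (mem_insert_self b I)] at hw
    have hwI := hσ₀ w ((H.mem_neighborFinset _ w).2 hw)
    exact ⟨σ₀.symm w, hwI, by rw [hσT (mem_insert_of_mem hwI), Equiv.apply_symm_apply]⟩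

theorem packs_of_partial_of_load_le (σ₀ : V ≃ W) {S A : Finset V} {b : V}
    {s w : ℕ} (hb : b ∈ S) (hAS : A ⊆ S)
    (hS : ∀ u ∈ S, ∀ v ∈ S, G.Adj u v → ¬ H.Adj (σ₀ u) (σ₀ v))
    (hnbr : ∀ y, H.Adj (σ₀ b) y → ∃ v ∈ S, σ₀ v = y)
    (hlow : ∀ v, v ≠ b → v ∉ A → G.degree v ≤ s)
    (hload : ∀ y, load H (G.degree ·) σ₀ A y ≤ w)
    (hroom : #S + s * (H.maxDegree + 1) + (w + H.maxDegree * s) < Fintype.card V) :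
    Packs G H := by
  refine packs_of_partial G H σ₀ S hS fun σ hσ u hu => lt_of_le_of_lt ?_ hroom
  have hub : ¬ H.Adj (σ u) (σ b) := by
    rw [hσ hb]
    intro h
    obtain ⟨v, hv, hvu⟩ := hnbr _ h.symm
    rw [← hσ hv] at hvu
    exact hu (σ.injective hvu ▸ hv)
  have hdeg : G.degree u ≤ s := hlow u (fun h => hu (h ▸ hb)) fun h => hu (hAS h)
  have hloadA : load H (G.degree ·) σ A (σ u) ≤ w := by
    rw [load_congr H (hσ.mono (mod_cast hAS))]
    exact hload _
  have hloadV : load H (G.degree ·) σ univ (σ u) ≤ w + H.maxDegree * s :=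
    (load_univ_le H σ.injective fun v hv hadj =>
      hlow v (fun h => hub (h ▸ hadj)) hv).trans (Nat.add_le_add_right hloadA _)
  gcongr

theorem packs_of_isIndepSet_insert [DecidableEq V] (hVW : Fintype.card V = Fintype.card W)
    {b : V} {I A : Finset V} {x : W} (hb : b ∉ I) (hI : #I = H.degree x)
    (hind : G.IsIndepSet (insert b I)) (hA : Disjoint (insert b I) A) {c k M s : ℕ}
    (hM : ∀ a ∈ A, G.degree a ≤ M) (hd : ∑ a ∈ A, G.degree a ≤ k * (c + 1))
    (hlow : ∀ v, v ≠ b → v ∉ A → G.degree v ≤ s)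
    (hplace : (#I + 1 + #A) * (H.maxDegree + 1) + k * H.maxDegree * H.maxDegree < Fintype.card W)
    (hcorrect : #I + 1 + #A + s * (H.maxDegree + 1) + (c + M + H.maxDegree * s)
      < Fintype.card V) :
    Packs G H := by
  obtain ⟨σ, hσ, hnbr, hload⟩ := exists_partial_packing G H hVW hb hI hind hA hM hd hplace
  have hS : #(insert b I ∪ A) ≤ #I + 1 + #A :=
    (card_union_le _ _).trans (Nat.add_le_add_right (card_insert_le b I) _)
  refine packs_of_partial_of_load_le G H σ (s := s) (mem_union_left _ (mem_insert_self b I))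
    subset_union_right hσ (fun y hy => ?_) hlow hload (lt_of_le_of_lt (by gcongr) hcorrect)
  obtain ⟨v, hv, hvy⟩ := hnbr y hy
  exact ⟨v, mem_union_left _ (mem_insert_of_mem hv), hvy⟩

theorem packs_of_card_edgeFinset_le (hVW : Fintype.card V = Fintype.card W) {s : ℕ}
    (hs : 1000 ≤ s) (hsV : s ^ 2 ≤ Fintype.card V) (hVs : Fintype.card V < (s + 1) ^ 2)
    (hHs : 200 * H.maxDegree ≤ s) (hG : #G.edgeFinset ≤ Fintype.card V)
    (hdeg : 8 * H.minDegree + G.maxDegree < Fintype.card V) : Packs G H := by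
  classical
  set n := Fintype.card V
  have : Nonempty V := Fintype.card_pos_iff.1 (by omega)
  have : Nonempty W := Fintype.card_pos_iff.1 (by omega)
  obtain ⟨b, hb⟩ := G.exists_maximal_degree_vertex
  obtain ⟨x, hx⟩ := H.exists_minimal_degree_vertex
  obtain ⟨I, hI, hbI, hIdeg, hind⟩ := exists_isIndepSet_insert G b hG (hb ▸ hdeg)
  have hIcard : #I ≤ H.maxDegree := hI.trans_le H.minDegree_le_maxDegree
  set A : Finset V := ({v | s < G.degree v} : Finset V).erase b with hA
  have hAdeg : ∀ a ∈ A, a ≠ b ∧ s < G.degree a := fun a ha => by simpa [hA] using ha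
  have hIA : Disjoint (insert b I) A := disjoint_left.2 fun v hv hvA => by
    have hv3 := hIdeg v (mem_of_mem_insert_of_ne hv (hAdeg v hvA).1)
    have hvs := (hAdeg v hvA).2
    omega
  have hAcard : #A ≤ 2 * s + 1 := by
    have h := card_mul_le_of_forall_le_degree G fun a ha => (hAdeg a ha).2
    nlinarith
  have hAhalf : ∀ a ∈ A, G.degree a ≤ (n + 1) / 2 := fun a ha => by
    have hab := degree_add_degree_le_card_edgeFinset_add_one G (hAdeg a ha).1
    have hle := G.degree_le_maxDegree a
    omega
  have hAsum : ∑ a ∈ A, G.degree a ≤ 8 * (n / 4 + 1) := by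
    have h := sum_degree_le_two_mul_card_edgeFinset G A
    omega
  refine packs_of_isIndepSet_insert G H hVW hbI (hI.trans hx) hind hIA hAhalf hAsum
    (fun v hvb hvA => ?_) (hVW ▸ placement_room hs hsV hHs hIcard hAcard)
    (correction_room hs hsV hHs (by omega))
  by_contra! h
  exact hvA (by simpa [hA, hvb] using h)

end Packing

theorem extremal_graph_contains_large_clique_general [Fintype V] [Fintype W]
    (hVW : Fintype.card V = Fintype.card W) (hn : 10 ^ 6 ≤ Fintype.card V)
    (H : SimpleGraph W) [DecidableRel H.Adj] (hH : (200 * H.maxDegree) ^ 2 ≤ Fintype.card V)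
    (F : SimpleGraph V)
    (hF : (Fintype.card V - 1).choose 2 + H.minDegree ≤ F.edgeSet.ncard + 1)
    (hFH : ¬ ContainsCopy F H) :
    ∃ K : Finset V, Fintype.card V ≤ #K + 8 * H.minDegree ∧ F.IsClique K := by
  classical
  have hedges : #Fᶜ.edgeFinset + H.minDegree ≤ Fintype.card V := by
    have hcompl := card_edgeFinset_compl_add_card_edgeFinset F
    rw [Set.ncard_eq_toFinset_card', ← SimpleGraph.edgeFinset] at hF
    obtain ⟨m, hm⟩ : ∃ m, Fintype.card V = m + 1 := ⟨Fintype.card V - 1, by omega⟩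
    rw [hm, Nat.choose_succ_succ' m 1, Nat.choose_one_right, one_add_one_eq_two] at hcompl
    rw [hm, Nat.add_sub_cancel] at hF
    omega
  have hdeg : Fintype.card V ≤ 8 * H.minDegree + Fᶜ.maxDegree := by
    by_contra! h
    exact hFH (packs_of_card_edgeFinset_le Fᶜ H hVW (Nat.le_sqrt'.2 hn) (Nat.sqrt_le' _)
      (Nat.lt_succ_sqrt' _) (Nat.le_sqrt'.2 hH) (by omega) h).containsCopy
  have : Nonempty V := Fintype.card_pos_iff.1 (by omega)
  obtain ⟨b, hb⟩ := Fᶜ.exists_maximal_degree_vertex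
  obtain ⟨K, hK, hKind⟩ := exists_isIndepSet_card_ge Fᶜ b
  have hlt := Fᶜ.degree_lt_card_verts b
  exact ⟨K, by omega, by simpa using hKind⟩

theorem extremal_graph_contains_large_clique :
    ∃ n₀ : ℕ, ∀ n : ℕ, n₀ ≤ n →
      ∀ (H : SimpleGraph (Fin n)) [DecidableRel H.Adj],
        (∀ v : Fin n, 0 < H.degree v) →
        (H.maxDegree : ℝ) ≤ Real.sqrt n / 200 →
        ∀ F : SimpleGraph (Fin n),
          F.edgeSet.ncard = (n - 1).choose 2 + H.minDegree - 1 →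
          ¬ ContainsCopy F H →
          ∃ K : Finset (Fin n),
            (n : ℝ) - 12 * H.minDegree < K.card ∧
            (∀ u ∈ K, ∀ w ∈ K, u ≠ w → F.Adj u w) := by
  refine ⟨10 ^ 6, fun n hn H _ hpos hΔ F hF hFH => ?_⟩
  have : Nonempty (Fin n) := ⟨⟨0, by omega⟩⟩
  have hδ : 0 < H.minDegree := by
    obtain ⟨x, hx⟩ := H.exists_minimal_degree_vertex
    exact hx ▸ hpos x
  have hΔ' : (200 * H.maxDegree) ^ 2 ≤ n := by
    have h : 200 * (H.maxDegree : ℝ) ≤ √n := by linarith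
    exact_mod_cast (Real.le_sqrt (by positivity) (by positivity)).1 h
  obtain ⟨K, hK, hclique⟩ := extremal_graph_contains_large_clique_general rfl (by simpa using hn) H
    (by simpa using hΔ') F (by rw [hF, Fintype.card_fin]; omega) hFH
  rw [Fintype.card_fin] at hK
  have hK' : (n : ℝ) ≤ #K + 8 * H.minDegree := mod_cast hK
  have hδ' : (0 : ℝ) < H.minDegree := mod_cast hδ
  exact ⟨K, by linarith, fun u hu w hw huw => hclique hu hw huw⟩
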